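/- Let β = i·tan((π − α)/4) and h(v) = (v − β)(βv − 1) / ((v + β)(βv + 1)). For a Borel function f on Δ_α, f ∈ L^1(w_α) if and only if ω ↦ f(h(e^{iω})) is integrable on (0, π); and in that case ∫_α^{2π−α} f(e^{iθ}) w_α(θ) dθ = ∫_0^{π} f(h(e^{iω})) dω. -/

import Mathlib

/-!
Writing `β = i t` with `t = tan ((π - α) / 4)`, the factor `v = exp (i ω)` cancels from `h v`, and
`2 t / (1 - t ^ 2) = cot (α / 2)` gives
`h (exp (i ω)) = (i x - 1) / (i x + 1)` with `x = cot (α / 2) * cos ω`.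
This point is `exp (i θ)` with `cot (θ / 2) = x`, that is, `θ = π - 2 arctan x` (`exp_arcAngle`,
`h_exp`). The map `ω ↦ θ` is an increasing bijection of `(0, π)` onto `(α, 2 π - α)`
(`injOn_arcAngle`, `image_arcAngle`), and its derivative is exactly the reciprocal of the weight
(`deriv_mul_wAC`). Both claims are then the one-dimensional change of variables formula.
-/

open MeasureTheory Filter Set

/-- The Akhiezer-Chebyshev weight on the arc `(α, 2π - α)`. -/
noncomputable def wAC (α θ : ℝ) : ℝ :=
  Real.sin (α / 2) /
    (2 * Real.sin (θ / 2) * Real.sqrt (Real.cos (α / 2) ^ 2 - Real.cos (θ / 2) ^ 2))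

/-- The angle `θ` of the point `h (exp (i ω))` of the arc, determined by
`cot (θ / 2) = cot (α / 2) * cos ω`. -/
noncomputable def arcAngle (α ω : ℝ) : ℝ :=
  Real.pi - 2 * Real.arctan (Real.cos (α / 2) / Real.sin (α / 2) * Real.cos ω)

lemma sin_half_pos {α : ℝ} (hα : α ∈ Set.Ioo 0 Real.pi) : 0 < Real.sin (α / 2) :=
  Real.sin_pos_of_pos_of_lt_pi (by linarith [hα.1]) (by linarith [hα.1, hα.2])

lemma cos_half_pos {α : ℝ} (hα : α ∈ Set.Ioo 0 Real.pi) : 0 < Real.cos (α / 2) :=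
  Real.cos_pos_of_mem_Ioo ⟨by linarith [hα.1, hα.2], by linarith [hα.2]⟩

lemma tan_half_compl (α : ℝ) :
    Real.tan ((Real.pi - α) / 2) = Real.cos (α / 2) / Real.sin (α / 2) := by
  rw [show (Real.pi - α) / 2 = Real.pi / 2 - α / 2 by ring, Real.tan_eq_sin_div_cos,
    Real.sin_pi_div_two_sub, Real.cos_pi_div_two_sub]

lemma arctan_cot {α : ℝ} (hα : α ∈ Set.Ioo 0 Real.pi) :
    Real.arctan (Real.cos (α / 2) / Real.sin (α / 2)) = (Real.pi - α) / 2 := by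
  rw [← tan_half_compl]
  exact Real.arctan_tan (by linarith [hα.1, hα.2]) (by linarith [hα.1])

lemma hasDerivAt_arcAngle (α ω : ℝ) :
    HasDerivAt (arcAngle α)
      (2 * (Real.cos (α / 2) / Real.sin (α / 2)) * Real.sin ω /
        (1 + (Real.cos (α / 2) / Real.sin (α / 2) * Real.cos ω) ^ 2)) ω := by
  have h1 := (((Real.hasDerivAt_cos ω).const_mul
    (Real.cos (α / 2) / Real.sin (α / 2))).arctan.const_mul 2).const_sub Real.pi
  exact h1.congr_deriv (by ring)

lemma injOn_arcAngle {α : ℝ} (hα : α ∈ Set.Ioo 0 Real.pi) :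
    InjOn (arcAngle α) (Ioo 0 Real.pi) := by
  intro x hx y hy hxy
  have hk := div_pos (cos_half_pos hα) (sin_half_pos hα)
  unfold arcAngle at hxy
  have h1 := Real.arctan_injective (mul_left_cancel₀ two_ne_zero (sub_right_injective hxy))
  exact Real.injOn_cos (Ioo_subset_Icc_self hx) (Ioo_subset_Icc_self hy)
    (mul_left_cancel₀ hk.ne' h1)

lemma image_arcAngle {α : ℝ} (hα : α ∈ Set.Ioo 0 Real.pi) :
    arcAngle α '' Ioo 0 Real.pi = Ioo α (2 * Real.pi - α) := by
  have hk := div_pos (cos_half_pos hα) (sin_half_pos hα)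
  have hat := arctan_cot hα
  have htan := tan_half_compl α
  unfold arcAngle
  set k := Real.cos (α / 2) / Real.sin (α / 2) with hkdef
  ext θ
  constructor
  · rintro ⟨ω, hω, rfl⟩
    have hc1 : Real.cos ω < 1 := by
      simpa using Real.cos_lt_cos_of_nonneg_of_le_pi le_rfl hω.2.le hω.1
    have hc2 : -1 < Real.cos ω := by
      simpa using Real.cos_lt_cos_of_nonneg_of_le_pi hω.1.le le_rfl hω.2
    have h1 : Real.arctan (k * Real.cos ω) < Real.arctan k :=
      Real.arctan_strictMono (by nlinarith)
    have h2 : Real.arctan (-k) < Real.arctan (k * Real.cos ω) :=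
      Real.arctan_strictMono (by nlinarith)
    rw [Real.arctan_neg] at h2
    constructor <;> dsimp only <;> linarith
  · rintro ⟨h1, h2⟩
    have hlo : -(Real.pi / 2) < (Real.pi - θ) / 2 := by linarith [hα.1]
    have hhi : (Real.pi - θ) / 2 < Real.pi / 2 := by linarith [hα.1]
    have ht1 : Real.tan ((Real.pi - θ) / 2) < k := by
      rw [← htan]
      exact Real.tan_lt_tan_of_lt_of_lt_pi_div_two hlo (by linarith [hα.1]) (by linarith)
    have ht2 : -k < Real.tan ((Real.pi - θ) / 2) := by
      rw [← htan, ← Real.tan_neg]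
      exact Real.tan_lt_tan_of_lt_of_lt_pi_div_two (by linarith [hα.1]) hhi (by linarith)
    have hb1 : Real.tan ((Real.pi - θ) / 2) / k < 1 := by rwa [div_lt_one hk]
    have hb2 : -1 < Real.tan ((Real.pi - θ) / 2) / k := by
      rw [lt_div_iff₀ hk]; linarith
    refine ⟨Real.arccos (Real.tan ((Real.pi - θ) / 2) / k), ⟨Real.arccos_pos.2 hb1, ?_⟩, ?_⟩
    · have h3 := Real.strictAntiOn_arccos (by norm_num) ⟨hb2.le, hb1.le⟩ hb2
      rwa [Real.arccos_neg_one] at h3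
    · dsimp only
      rw [Real.cos_arccos hb2.le hb1.le, mul_div_cancel₀ _ hk.ne', Real.arctan_tan hlo hhi]
      ring

/-- The derivative of `arcAngle α` is positive and is the reciprocal of the weight: with
`x = cot (α / 2) * cos ω` one has `sin (θ / 2) = 1 / √(1 + x ^ 2)`, and the radical in the weight
equals `cos (α / 2) * sin ω / √(1 + x ^ 2)`. -/
lemma deriv_mul_wAC {α ω : ℝ} (hα : α ∈ Set.Ioo 0 Real.pi) (hω : ω ∈ Set.Ioo 0 Real.pi) :
    |2 * (Real.cos (α / 2) / Real.sin (α / 2)) * Real.sin ω /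
        (1 + (Real.cos (α / 2) / Real.sin (α / 2) * Real.cos ω) ^ 2)| *
      wAC α (arcAngle α ω) = 1 := by
  have hs := sin_half_pos hα
  have hc := cos_half_pos hα
  have hso := Real.sin_pos_of_mem_Ioo hω
  rw [abs_of_pos (by positivity)]
  unfold wAC arcAngle
  have hsc := Real.sin_sq_add_cos_sq (α / 2)
  have hsco := Real.sin_sq_add_cos_sq ω
  set s := Real.sin (α / 2)
  set c := Real.cos (α / 2)
  set x := c / s * Real.cos ω with hx
  have hxs : x * s = c * Real.cos ω := by rw [hx]; field_simp
  rw [show (Real.pi - 2 * Real.arctan x) / 2 = Real.pi / 2 - Real.arctan x by ring,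
    Real.sin_pi_div_two_sub, Real.cos_pi_div_two_sub, Real.cos_arctan, Real.sin_arctan]
  have hR : 0 < √(1 + x ^ 2) := Real.sqrt_pos.2 (by positivity)
  have hR2 : √(1 + x ^ 2) ^ 2 = 1 + x ^ 2 := Real.sq_sqrt (by positivity)
  set R := √(1 + x ^ 2)
  have hrad : c ^ 2 - (x / R) ^ 2 = (c * Real.sin ω / R) ^ 2 := by
    field_simp
    rw [hR2]
    linear_combination (-c ^ 2) * hsco + x ^ 2 * hsc - (x * s + c * Real.cos ω) * hxs
  rw [hrad, Real.sqrt_sq (by positivity), ← hR2]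
  field_simp

/-- The point of the unit circle whose half-angle has cotangent `x`. -/
lemma exp_arcAngle (x : ℝ) :
    Complex.exp (((Real.pi - 2 * Real.arctan x : ℝ) : ℂ) * Complex.I) =
      (Complex.I * x - 1) / (Complex.I * x + 1) := by
  have hR : 0 < √(1 + x ^ 2) := Real.sqrt_pos.2 (by positivity)
  have hR2 : √(1 + x ^ 2) ^ 2 = 1 + x ^ 2 := Real.sq_sqrt (by positivity)
  have hden : Complex.I * x + 1 ≠ 0 := by
    intro h0
    simpa using congrArg Complex.re h0
  rw [eq_div_iff hden, Complex.exp_mul_I, ← Complex.ofReal_cos, ← Complex.ofReal_sin,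
    Real.cos_pi_sub, Real.sin_pi_sub, Real.cos_two_mul, Real.sin_two_mul, Real.cos_arctan,
    Real.sin_arctan]
  have hC : ((√(1 + x ^ 2) : ℝ) : ℂ) ≠ 0 := by exact_mod_cast hR.ne'
  have hC2 : ((√(1 + x ^ 2) : ℝ) : ℂ) ^ 2 = 1 + (x : ℂ) ^ 2 := by exact_mod_cast hR2
  push_cast
  field_simp
  rw [hC2]
  ring_nf
  simp only [Complex.I_sq]
  ring

lemma h_exp {α : ℝ} (hα : α ∈ Set.Ioo 0 Real.pi) (ω : ℝ) {β : ℂ}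
    (hβ : β = Complex.I * Real.tan ((Real.pi - α) / 4)) :
    ((Complex.exp (ω * Complex.I) - β) * (β * Complex.exp (ω * Complex.I) - 1)) /
        ((Complex.exp (ω * Complex.I) + β) * (β * Complex.exp (ω * Complex.I) + 1)) =
      Complex.exp ((arcAngle α ω : ℝ) * Complex.I) := by
  unfold arcAngle
  rw [exp_arcAngle, ← tan_half_compl,
    show (Real.pi - α) / 2 = 2 * ((Real.pi - α) / 4) by ring, Real.tan_two_mul, hβ]
  have ht0 : 0 < Real.tan ((Real.pi - α) / 4) :=
    Real.tan_pos_of_pos_of_lt_pi_div_two (by linarith [hα.2]) (by linarith [hα.1, Real.pi_pos])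
  have ht1 : Real.tan ((Real.pi - α) / 4) < 1 := by
    rw [← Real.tan_pi_div_four]
    exact Real.tan_lt_tan_of_lt_of_lt_pi_div_two (by linarith [hα.2, Real.pi_pos])
      (by linarith [Real.pi_pos]) (by linarith [hα.1])
  generalize Real.tan ((Real.pi - α) / 4) = t at ht0 ht1
  have hd : 0 < 1 - t ^ 2 := by nlinarith
  have hdC : (1 - (t : ℂ) ^ 2) ≠ 0 := by exact_mod_cast hd.ne'
  have hcos : Complex.exp (ω * Complex.I) ^ 2 + 1 =
      2 * Real.cos ω * Complex.exp (ω * Complex.I) := by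
    rw [Complex.exp_mul_I, ← Complex.ofReal_cos, ← Complex.ofReal_sin]
    have h1 : (Real.sin ω : ℂ) ^ 2 + (Real.cos ω : ℂ) ^ 2 = 1 := by
      exact_mod_cast Real.sin_sq_add_cos_sq ω
    linear_combination (Real.sin ω : ℂ) ^ 2 * Complex.I_sq - h1
  have hv := Complex.exp_ne_zero (ω * Complex.I)
  generalize Complex.exp (ω * Complex.I) = v at hcos hv
  have hnum : (v - Complex.I * t) * (Complex.I * t * v - 1) =
      (v * (1 - (t : ℂ) ^ 2)) *
        (Complex.I * ((2 * t / (1 - t ^ 2) * Real.cos ω : ℝ) : ℂ) - 1) := by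
    push_cast
    field_simp
    push_cast at hcos
    linear_combination (Complex.I * t) * hcos - t ^ 2 * v * Complex.I_sq
  have hden : (v + Complex.I * t) * (Complex.I * t * v + 1) =
      (v * (1 - (t : ℂ) ^ 2)) *
        (Complex.I * ((2 * t / (1 - t ^ 2) * Real.cos ω : ℝ) : ℂ) + 1) := by
    push_cast
    field_simp
    push_cast at hcos
    linear_combination (Complex.I * t) * hcos + t ^ 2 * v * Complex.I_sq
  rw [hnum, hden, mul_div_mul_left _ _ (mul_ne_zero hv hdC)]

theorem stmt8 (α : ℝ) (hα : α ∈ Set.Ioo 0 Real.pi)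
    (β : ℂ) (hβ : β = Complex.I * Real.tan ((Real.pi - α) / 4))
    (h : ℂ → ℂ) (hh : h = fun v => ((v - β) * (β * v - 1)) / ((v + β) * (β * v + 1)))
    (f : ℂ → ℂ) (hf : Measurable f) :
    (IntegrableOn (fun θ : ℝ => f (Complex.exp (θ * Complex.I)) * ((wAC α θ : ℝ) : ℂ))
        (Set.Ioo α (2 * Real.pi - α)) ↔
      IntegrableOn (fun ω : ℝ => f (h (Complex.exp (ω * Complex.I)))) (Set.Ioo 0 Real.pi)) ∧
    (IntegrableOn (fun θ : ℝ => f (Complex.exp (θ * Complex.I)) * ((wAC α θ : ℝ) : ℂ))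
        (Set.Ioo α (2 * Real.pi - α)) →
      ∫ θ in Set.Ioo α (2 * Real.pi - α),
          f (Complex.exp (θ * Complex.I)) * ((wAC α θ : ℝ) : ℂ) =
        ∫ ω in Set.Ioo 0 Real.pi, f (h (Complex.exp (ω * Complex.I)))) := by
  have hder : ∀ ω ∈ Ioo 0 Real.pi, HasDerivWithinAt (arcAngle α) _ (Ioo 0 Real.pi) ω :=
    fun ω _ => (hasDerivAt_arcAngle α ω).hasDerivWithinAt
  have hinj := injOn_arcAngle hα
  -- After the substitution `θ = arcAngle α ω` the Jacobian cancels the weight.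
  have hpt : ∀ ω ∈ Ioo 0 Real.pi,
      |2 * (Real.cos (α / 2) / Real.sin (α / 2)) * Real.sin ω /
        (1 + (Real.cos (α / 2) / Real.sin (α / 2) * Real.cos ω) ^ 2)| •
        (f (Complex.exp ((arcAngle α ω : ℝ) * Complex.I)) * ((wAC α (arcAngle α ω) : ℝ) : ℂ)) =
      f (h (Complex.exp (ω * Complex.I))) := by
    intro ω hω
    have h1 := h_exp hα ω hβ
    have h2 : ((_ : ℝ) : ℂ) = ((1 : ℝ) : ℂ) := congrArg _ (deriv_mul_wAC hα hω)
    rw [Complex.ofReal_mul, Complex.ofReal_one] at h2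
    rw [hh]
    dsimp only
    rw [h1, Complex.real_smul, mul_left_comm, h2, mul_one]
  rw [← image_arcAngle hα]
  refine ⟨?_, fun _ => ?_⟩
  · rw [integrableOn_image_iff_integrableOn_abs_deriv_smul measurableSet_Ioo hder hinj]
    exact integrableOn_congr_fun hpt measurableSet_Ioo
  · rw [integral_image_eq_integral_abs_deriv_smul measurableSet_Ioo hder hinj]
    exact setIntegral_congr_fun measurableSet_Ioo hpt
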